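/- arXiv:0806.2518 — 4 statements merged into one kernel-verified Lean document; each statement's English description precedes it below -/
import Mathlib

section
/- Let g : ℝ → ℝ be a measurable function and let 0 < c ≤ C be constants with c ≤ g(y) ≤ C for all y ∈ ℝ. Assume that (1/x)∫₀ˣ g(y) dy → m as x → +∞ and as x → −∞ (where ∫₀ˣ := −∫ₓ⁰ for x < 0). Then for every N > 0, sup_{|x| ≤ N} |∫₀ˣ g(z/ε) dz − m·x| → 0 as ε → 0⁺. -/
open MeasureTheory Filter intervalIntegral

/-- deterministic content of Lemma 3.4.
Let `g : ℝ → ℝ` be measurable with `0 < c ≤ g ≤ C`, and assume that the averages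
`(1/x) ∫₀ˣ g(y) dy` converge to `m` as `x → +∞` and as `x → −∞`.  Then for every `N > 0`,
`sup_{|x| ≤ N} |∫₀ˣ g(z/ε) dz − m x| → 0` as `ε → 0⁺`, i.e. the functions
`x ↦ ∫₀ˣ g(z/ε) dz` converge to `x ↦ m x` uniformly on `{x : |x| ≤ N}`. -/
theorem stmt0 (g : ℝ → ℝ) (hg : Measurable g) (c C : ℝ) (hc : 0 < c) (hcC : c ≤ C)
    (hlow : ∀ y, c ≤ g y) (hup : ∀ y, g y ≤ C) (m : ℝ)
    (htop : Tendsto (fun x => (1 / x) * ∫ y in (0:ℝ)..x, g y) atTop (nhds m))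
    (hbot : Tendsto (fun x => (1 / x) * ∫ y in (0:ℝ)..x, g y) atBot (nhds m))
    (N : ℝ) (hN : 0 < N) :
    TendstoUniformlyOn (fun ε x => ∫ z in (0:ℝ)..x, g (z / ε)) (fun x => m * x)
      (nhdsWithin 0 (Set.Ioi 0)) {x : ℝ | |x| ≤ N} := by
  have hC : 0 < C := lt_of_lt_of_le hc hcC
  have hGb : ∀ y : ℝ, |∫ t in (0:ℝ)..y, g t| ≤ C * |y| := by
    intro y
    have h := intervalIntegral.norm_integral_le_of_norm_le_const (a := 0) (b := y) (f := g)
      (C := C) (fun t _ => by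
        rw [Real.norm_eq_abs, abs_of_pos (lt_of_lt_of_le hc (hlow t))]
        exact hup t)
    simpa using h
  rw [Metric.tendstoUniformlyOn_iff]
  intro δ hδ
  have hη : 0 < δ / (2 * N) := by positivity
  obtain ⟨R₁, hR₁⟩ := Filter.eventually_atTop.1 (Metric.tendsto_nhds.1 htop _ hη)
  obtain ⟨R₂, hR₂⟩ := Filter.eventually_atBot.1 (Metric.tendsto_nhds.1 hbot _ hη)
  set η := δ / (2 * N) with hηdef
  set R : ℝ := max 1 (max R₁ (-R₂)) with hR
  have hR1 : 1 ≤ R := le_max_left _ _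
  have hRa : R₁ ≤ R := le_trans (le_max_left _ _) (le_max_right _ _)
  have hRb : -R₂ ≤ R := le_trans (le_max_right _ _) (le_max_right _ _)
  set K : ℝ := (C + |m|) * R with hK
  have hKpos : 0 < K := by positivity
  have key : ∀ y : ℝ, |(∫ t in (0:ℝ)..y, g t) - m * y| ≤ η * |y| + K := by
    intro y
    by_cases hy : |y| ≤ R
    · have h1 := abs_sub (∫ t in (0:ℝ)..y, g t) (m * y)
      have h2 := hGb y
      rw [abs_mul] at h1
      have h3 : (C + |m|) * |y| ≤ K := mul_le_mul_of_nonneg_left hy (by positivity)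
      have h4 : 0 ≤ η * |y| := by positivity
      linarith
    · push Not at hy
      have hy0 : y ≠ 0 := by
        rintro rfl
        simp at hy
        linarith
      have h1 : |(1 / y) * (∫ t in (0:ℝ)..y, g t) - m| < η := by
        rcases lt_abs.1 hy with h | h
        · exact hR₁ y (by linarith)
        · exact hR₂ y (by linarith)
      have h2 : (∫ t in (0:ℝ)..y, g t) - m * y
          = ((1 / y) * (∫ t in (0:ℝ)..y, g t) - m) * y := by
        field_simp
      rw [h2, abs_mul]
      have h3 := mul_le_mul_of_nonneg_right h1.le (abs_nonneg y)
      linarith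
  have hε0 : 0 < δ / (2 * K) := by positivity
  filter_upwards [Ioo_mem_nhdsGT hε0] with ε hε x hx
  obtain ⟨hεp, hεl⟩ := hε
  have hx' : |x| ≤ N := hx
  have hint : ∫ z in (0:ℝ)..x, g (z / ε) = ε * ∫ t in (0:ℝ)..(x / ε), g t := by
    rw [intervalIntegral.integral_comp_div _ hεp.ne']
    simp
  rw [dist_comm, Real.dist_eq, hint]
  have h2 : ε * (∫ t in (0:ℝ)..(x / ε), g t) - m * x
      = ε * ((∫ t in (0:ℝ)..(x / ε), g t) - m * (x / ε)) := by
    field_simp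
  rw [h2, abs_mul, abs_of_pos hεp]
  have h3 := mul_le_mul_of_nonneg_left (key (x / ε)) hεp.le
  have h4 : ε * (η * |x / ε| + K) = η * |x| + ε * K := by
    rw [abs_div, abs_of_pos hεp]
    field_simp
  have h5 : η * |x| ≤ η * N := mul_le_mul_of_nonneg_left hx' hη.le
  have h6 : η * N = δ / 2 := by
    rw [hηdef]
    field_simp
  have h7 : ε * K < δ / 2 := by
    have := mul_lt_mul_of_pos_right hεl hKpos
    have h8 : δ / (2 * K) * K = δ / 2 := by field_simp
    linarith
  linarith
end

section
/- Let g : ℝ → ℝ be a bounded measurable function and m ∈ ℝ such that (1/x)∫₀ˣ g(z) dz → m as x → +∞ and as x → −∞ (where ∫₀ˣ := −∫ₓ⁰ for x < 0). Then for every continuous function f : ℝ → ℝ, every x ∈ ℝ and every N > 0, sup_{|y−x| ≤ N} |∫ₓʸ f(z) g(z/ε) dz − m ∫ₓʸ f(z) dz| → 0 as ε → 0⁺. -/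
open MeasureTheory Filter intervalIntegral


theorem aux_int (h : ℝ → ℝ) (hh : Measurable h) (C : ℝ) (hC : ∀ z, |h z| ≤ C) (f : ℝ → ℝ)
    (hf : Continuous f) (a b : ℝ) : IntervalIntegrable (fun z => f z * h z) volume a b := by
  have h1 : IntervalIntegrable h volume a b := by
    refine (intervalIntegrable_const (c := C)).mono_fun hh.aestronglyMeasurable ?_
    refine Eventually.of_forall fun z => ?_
    simp only [Real.norm_eq_abs]
    exact (hC z).trans (le_abs_self C)
  exact h1.continuousOn_mul hf.continuousOn

theorem aux_int1 (h : ℝ → ℝ) (hh : Measurable h) (C : ℝ) (hC : ∀ z, |h z| ≤ C)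
    (a b : ℝ) : IntervalIntegrable h volume a b := by
  simpa using aux_int h hh C hC (fun _ => 1) continuous_const a b

theorem aux_prim (h : ℝ → ℝ) (C : ℝ) (hC : ∀ z, |h z| ≤ C)
    (htop : Tendsto (fun x => (1 / x) * ∫ z in (0:ℝ)..x, h z) atTop (nhds 0))
    (hbot : Tendsto (fun x => (1 / x) * ∫ z in (0:ℝ)..x, h z) atBot (nhds 0))
    (η R : ℝ) (hη : 0 < η) (hR : 0 < R) :
    ∃ ε0 > 0, ∀ ε, 0 < ε → ε < ε0 → ∀ y, |y| ≤ R → |∫ z in (0:ℝ)..y, h (z / ε)| ≤ η := by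
  have hC0 : 0 ≤ C := (abs_nonneg _).trans (hC 0)
  have e1 := (Metric.tendsto_nhds.1 htop) (η / R) (by positivity)
  have e2 := (Metric.tendsto_nhds.1 hbot) (η / R) (by positivity)
  obtain ⟨A1, h1⟩ := eventually_atTop.1 e1
  obtain ⟨A2, h2⟩ := eventually_atBot.1 e2
  obtain ⟨A, hA, hA1, hA2⟩ : ∃ A : ℝ, 0 < A ∧ A1 ≤ A ∧ -A2 ≤ A :=
    ⟨max 1 (max A1 (-A2)), by positivity, by simp, by simp⟩
  refine ⟨η / (C * A + 1), by positivity, fun ε hε hε0 y hy => ?_⟩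
  rw [intervalIntegral.integral_comp_div _ hε.ne', zero_div, smul_eq_mul, abs_mul, abs_of_pos hε]
  have hb : |∫ z in (0:ℝ)..(y / ε), h z| ≤ C * |y / ε| := by
    have := intervalIntegral.norm_integral_le_of_norm_le_const (a := 0) (b := y / ε) (f := h)
      (C := C) (fun z _ => hC z)
    simpa using this
  by_cases ht : |y / ε| ≤ A
  · have : ε * (C * A + 1) < η := by rwa [lt_div_iff₀ (by positivity)] at hε0
    have h3 : C * |y / ε| ≤ C * A := by gcongr
    nlinarith
  · push Not at ht
    have key : |(1 / (y / ε)) * ∫ z in (0:ℝ)..(y / ε), h z| < η / R := by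
      rcases le_total 0 (y / ε) with h0 | h0
      · rw [abs_of_nonneg h0] at ht
        have h9 := h1 (y / ε) (by linarith)
        rwa [Real.dist_eq, sub_zero] at h9
      · rw [abs_of_nonpos h0] at ht
        have h9 := h2 (y / ε) (by linarith)
        rwa [Real.dist_eq, sub_zero] at h9
    have hpos : 0 < |y / ε| := hA.trans ht
    rw [abs_mul, abs_div, abs_one, one_div, inv_mul_eq_div, div_lt_iff₀ hpos] at key
    calc ε * |∫ z in (0:ℝ)..(y / ε), h z| ≤ ε * (η / R * |y / ε|) := by gcongr
      _ = η / R * |y| := by rw [abs_div, abs_of_pos hε]; field_simp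
      _ ≤ η / R * R := by gcongr
      _ = η := by field_simp

theorem aux_main (h : ℝ → ℝ) (hh : Measurable h) (C : ℝ) (hC : ∀ z, |h z| ≤ C)
    (htop : Tendsto (fun x => (1 / x) * ∫ z in (0:ℝ)..x, h z) atTop (nhds 0))
    (hbot : Tendsto (fun x => (1 / x) * ∫ z in (0:ℝ)..x, h z) atBot (nhds 0))
    (f : ℝ → ℝ) (hf : Continuous f) (x N : ℝ) (hN : 0 < N) (τ : ℝ) (hτ : 0 < τ) :
    ∃ ε0 > 0, ∀ ε, 0 < ε → ε < ε0 → ∀ y, |y - x| ≤ N →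
      |∫ z in x..y, f z * h (z / ε)| < τ := by
  have hC0 : 0 ≤ C := (abs_nonneg _).trans (hC 0)
  have hcpt : IsCompact (Set.Icc (x - N) (x + N)) := isCompact_Icc
  obtain ⟨M, hM⟩ := hcpt.exists_bound_of_continuousOn hf.continuousOn
  have hM0 : 0 ≤ M := (norm_nonneg _).trans (hM x ⟨by linarith, by linarith⟩)
  obtain ⟨e, he, heτ⟩ : ∃ e > 0, e * C * N < τ / 2 := by
    refine ⟨τ / (2 * (C * N + 1)), by positivity, ?_⟩
    rw [div_mul_eq_mul_div, div_mul_eq_mul_div, div_lt_iff₀ (by positivity)]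
    nlinarith
  obtain ⟨δ, hδ, hu⟩ := Metric.uniformContinuousOn_iff.1
    (hcpt.uniformContinuousOn_of_continuous hf.continuousOn) e he
  obtain ⟨n, hn⟩ := exists_nat_gt (N / δ)
  have hn0 : (0 : ℝ) < n := lt_of_le_of_lt (by positivity) hn
  have hnδ : N / n < δ := by
    rw [div_lt_iff₀ hδ] at hn
    rw [div_lt_iff₀ hn0]; linarith
  obtain ⟨ε0, hε0, hP⟩ := aux_prim h C hC htop hbot (τ / (2 * (2 * n * M + 1))) (|x| + N)
    (by positivity) (by positivity)
  refine ⟨ε0, hε0, fun ε hε hεl y hy => ?_⟩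
  set η := τ / (2 * (2 * n * M + 1)) with hη
  have hη2 : n * (M * (2 * η)) < τ / 2 := by
    have : n * (M * (2 * η)) = (n * M * 2 * τ) / (2 * (2 * n * M + 1)) := by rw [hη]; ring
    rw [this, div_lt_iff₀ (by positivity)]
    nlinarith
  have hk := hP ε hε hεl
  set k : ℝ → ℝ := fun z => h (z / ε) with hkdef
  have hkm : Measurable k := hh.comp (measurable_id.div_const ε)
  have hkC : ∀ z, |k z| ≤ C := fun z => hC _
  have hi := aux_int1 k hkm C hkC
  have hfi := aux_int k hkm C hkC f hf
  let t : ℕ → ℝ := fun j => x + (j / n : ℝ) * (y - x)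
  have ht0 : t 0 = x := by simp [t]
  have htn : t n = y := by simp [t, hn0.ne']
  have hstep : ∀ j, t (j + 1) - t j = (y - x) / n := by
    intro j; simp only [t]; push_cast; ring
  have hstepa : ∀ j, |t (j + 1) - t j| ≤ N / n := by
    intro j; rw [hstep, abs_div, abs_of_pos hn0]; gcongr
  have hta : ∀ j, j ≤ n → |t j - x| ≤ N := by
    intro j hj
    have : t j - x = (j / n : ℝ) * (y - x) := by simp [t]
    rw [this, abs_mul, abs_of_nonneg (by positivity)]
    have h1 : (j / n : ℝ) ≤ 1 := by
      rw [div_le_one hn0]; exact_mod_cast hj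
    calc (j / n : ℝ) * |y - x| ≤ 1 * N := by gcongr
      _ = N := one_mul N
  have hmem : ∀ j, j ≤ n → t j ∈ Set.Icc (x - N) (x + N) := by
    intro j hj
    have := abs_le.1 (hta j hj)
    exact ⟨by linarith, by linarith⟩
  have hsum : ∑ j ∈ Finset.range n, ∫ z in (t j)..(t (j + 1)), f z * k z
      = ∫ z in x..y, f z * k z := by
    rw [intervalIntegral.sum_integral_adjacent_intervals (fun j _ => hfi _ _), ht0, htn]
  have hterm : ∀ j ∈ Finset.range n, |∫ z in (t j)..(t (j + 1)), f z * k z|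
      ≤ M * (2 * η) + e * C * (N / n) := by
    intro j hj
    rw [Finset.mem_range] at hj
    have hsplit : ∫ z in (t j)..(t (j + 1)), f z * k z
        = f (t j) * ((∫ z in (0:ℝ)..(t (j + 1)), k z) - ∫ z in (0:ℝ)..(t j), k z)
          + ∫ z in (t j)..(t (j + 1)), (f z - f (t j)) * k z := by
      rw [intervalIntegral.integral_interval_sub_left (hi _ _) (hi _ _),
        ← intervalIntegral.integral_const_mul, ← intervalIntegral.integral_add
          ((hi _ _).const_mul _) (aux_int k hkm C hkC (fun z => f z - f (t j)) (hf.sub continuous_const) _ _)]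
      congr 1; ext z; ring
    have hR : ∀ i, i ≤ n → |∫ z in (0:ℝ)..(t i), k z| ≤ η := by
      intro i hin
      apply hk
      have h1 := abs_add_le (t i - x) x
      rw [sub_add_cancel] at h1
      linarith [hta i hin]
    have h1 : |f (t j) * ((∫ z in (0:ℝ)..(t (j + 1)), k z) - ∫ z in (0:ℝ)..(t j), k z)|
        ≤ M * (2 * η) := by
      rw [abs_mul]
      have h3 := hM _ (hmem j hj.le)
      rw [Real.norm_eq_abs] at h3
      have h4 := abs_sub (∫ z in (0:ℝ)..(t (j + 1)), k z) (∫ z in (0:ℝ)..(t j), k z)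
      have h5 := hR _ hj.le
      have h6 := hR (j + 1) hj
      gcongr
      linarith
    have h2 : |∫ z in (t j)..(t (j + 1)), (f z - f (t j)) * k z| ≤ e * C * (N / n) := by
      have h3 := intervalIntegral.norm_integral_le_of_norm_le_const (a := t j) (b := t (j + 1))
        (f := fun z => (f z - f (t j)) * k z) (C := e * C) (by
          intro z hz
          have hz' := Set.uIoc_subset_uIcc hz
          have hzm : z ∈ Set.Icc (x - N) (x + N) :=
            Set.ordConnected_Icc.uIcc_subset (hmem j hj.le) (hmem (j + 1) hj) hz'
          have hd : dist z (t j) < δ := by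
            rw [Real.dist_eq]
            exact ((Set.abs_sub_left_of_mem_uIcc hz').trans (hstepa j)).trans_lt hnδ
          have h7 := hu z hzm (t j) (hmem j hj.le) hd
          rw [Real.dist_eq] at h7
          rw [norm_mul, Real.norm_eq_abs, Real.norm_eq_abs]
          exact mul_le_mul h7.le (hkC z) (abs_nonneg _) he.le)
      rw [Real.norm_eq_abs] at h3
      refine h3.trans ?_
      have := hstepa j
      gcongr
    rw [hsplit]
    exact (abs_add_le _ _).trans (add_le_add h1 h2)
  have hfin : |∫ z in x..y, f z * k z| ≤ n * (M * (2 * η) + e * C * (N / n)) := by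
    rw [← hsum]
    refine (Finset.abs_sum_le_sum_abs _ _).trans ((Finset.sum_le_sum hterm).trans ?_)
    rw [Finset.sum_const, Finset.card_range, nsmul_eq_mul]
  have h8 : n * (M * (2 * η) + e * C * (N / n)) = n * (M * (2 * η)) + e * C * N := by
    field_simp
  linarith

/-- deterministic content of Proposition 3.11.
Let `g : ℝ → ℝ` be bounded and measurable with `(1/x) ∫₀ˣ g(z) dz → m` as `x → ±∞`.
Then for every continuous `f`, every `x ∈ ℝ` and `N > 0`,
`sup_{|y−x| ≤ N} |∫ₓʸ f(z) g(z/ε) dz − m ∫ₓʸ f(z) dz| → 0` as `ε → 0⁺`. -/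
theorem stmt2 (g : ℝ → ℝ) (hg : Measurable g) (K : ℝ) (hK : ∀ z, |g z| ≤ K) (m : ℝ)
    (htop : Tendsto (fun x => (1 / x) * ∫ z in (0:ℝ)..x, g z) atTop (nhds m))
    (hbot : Tendsto (fun x => (1 / x) * ∫ z in (0:ℝ)..x, g z) atBot (nhds m))
    (f : ℝ → ℝ) (hf : Continuous f) (x : ℝ) (N : ℝ) (hN : 0 < N) :
    TendstoUniformlyOn (fun ε y => ∫ z in x..y, f z * g (z / ε))
      (fun y => m * ∫ z in x..y, f z) (nhdsWithin 0 (Set.Ioi 0)) {y : ℝ | |y - x| ≤ N} := by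
  have hgi := aux_int1 g hg K hK
  have hG : ∀ t : ℝ, t ≠ 0 → (1 / t) * (∫ z in (0:ℝ)..t, (g z - m))
      = (1 / t) * (∫ z in (0:ℝ)..t, g z) - m := by
    intro t ht
    rw [intervalIntegral.integral_sub (hgi _ _) intervalIntegrable_const,
      intervalIntegral.integral_const, smul_eq_mul]
    field_simp
    ring
  have hhm : Measurable (fun z => g z - m) := hg.sub_const m
  have hhC : ∀ z, |g z - m| ≤ K + |m| := fun z =>
    (abs_sub (g z) m).trans (by linarith [hK z])
  have ht' : Tendsto (fun t => (1 / t) * ∫ z in (0:ℝ)..t, (g z - m)) atTop (nhds 0) := by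
    have := htop.sub_const m
    rw [sub_self] at this
    refine this.congr' ?_
    filter_upwards [eventually_ne_atTop 0] with t ht using (hG t ht).symm
  have hb' : Tendsto (fun t => (1 / t) * ∫ z in (0:ℝ)..t, (g z - m)) atBot (nhds 0) := by
    have := hbot.sub_const m
    rw [sub_self] at this
    refine this.congr' ?_
    filter_upwards [eventually_ne_atBot 0] with t ht using (hG t ht).symm
  rw [Metric.tendstoUniformlyOn_iff]
  intro τ hτ
  obtain ⟨ε0, hε0, hmain⟩ := aux_main _ hhm _ hhC ht' hb' f hf x N hN τ hτ
  filter_upwards [Ioo_mem_nhdsGT hε0] with ε hε y hy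
  have h1 := hmain ε hε.1 hε.2 y hy
  rw [dist_comm, Real.dist_eq]
  have h2 : (∫ z in x..y, f z * g (z / ε)) - m * ∫ z in x..y, f z
      = ∫ z in x..y, f z * (g (z / ε) - m) := by
    rw [← intervalIntegral.integral_const_mul, ← intervalIntegral.integral_sub
      (aux_int (fun z => g (z / ε)) (hg.comp (measurable_id.div_const ε)) K (fun z => hK _) f hf
        x y) ((hf.intervalIntegrable _ _).const_mul m)]
    congr 1; ext z; ring
  rw [h2]
  exact h1
end

section
/- Let E and E' be Polish spaces with their Borel σ-algebras, (Σ, 𝒜, P) a probability space, μ a Borel probability measure on E and ν a Borel probability measure on E'. For each n, let X_n : Σ → E be measurable and let κ_n be a Markov kernel from Σ to E'. Assume: (i) the laws of X_n converge weakly to μ; (ii) for every bounded continuous Θ : E' → ℝ, for P-a.e. σ, ∫ Θ(y) κ_n(σ, dy) → ∫ Θ dν as n → ∞. Then the probability measures π_n on E × E' determined by π_n(A × B) = ∫_Σ 1_A(X_n(σ)) κ_n(σ, B) P(dσ) converge weakly to the product measure μ ⊗ ν. -/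
open MeasureTheory ProbabilityTheory Filter Set

open Topology
open scoped ENNReal NNReal BoundedContinuousFunction

/-- Portmanteau bound on a closed set, using only the approximating sequence. -/
lemma limsup_closed_le_aux {Y : Type*} [MeasurableSpace Y] [TopologicalSpace Y]
    [HasOuterApproxClosed Y] [OpensMeasurableSpace Y] (ν : Measure Y) [IsProbabilityMeasure ν]
    (m : ℕ → Measure Y) [∀ n, IsProbabilityMeasure (m n)] {F : Set Y} (hF : IsClosed F)
    (h : ∀ k, Tendsto (fun n => ∫ y, ((hF.apprSeq k y : ℝ≥0) : ℝ) ∂(m n)) atTop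
      (𝓝 (∫ y, ((hF.apprSeq k y : ℝ≥0) : ℝ) ∂ν))) :
    limsup (fun n => m n F) atTop ≤ ν F := by
  refine ge_of_tendsto' (HasOuterApproxClosed.tendsto_lintegral_apprSeq hF ν) (fun k => ?_)
  have hk : Tendsto (fun n => ∫⁻ y, (hF.apprSeq k y : ℝ≥0∞) ∂(m n)) atTop
      (𝓝 (∫⁻ y, (hF.apprSeq k y : ℝ≥0∞) ∂ν)) := by
    have h' := h k
    simp only [← BoundedContinuousFunction.toReal_lintegral_coe_eq_integral] at h'
    exact (ENNReal.tendsto_toReal_iff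
      (fun n => (BoundedContinuousFunction.lintegral_lt_top_of_nnreal (m n) _).ne)
      (BoundedContinuousFunction.lintegral_lt_top_of_nnreal ν _).ne).1 h'
  rw [← hk.limsup_eq]
  exact limsup_le_limsup
    (Eventually.of_forall fun n => HasOuterApproxClosed.measure_le_lintegral hF (m n) k)

/-- Almost sure convergence of quenched probabilities of continuity sets. -/
lemma ae_tendsto_kernel_aux {Y S : Type*} [MeasurableSpace Y] [TopologicalSpace Y]
    [HasOuterApproxClosed Y] [OpensMeasurableSpace Y] [MeasurableSpace S] (P : Measure S)
    (ν : Measure Y) [IsProbabilityMeasure ν] (κ : ℕ → Kernel S Y) [∀ n, IsMarkovKernel (κ n)]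
    (h2 : ∀ Θ : BoundedContinuousFunction Y ℝ,
      ∀ᵐ σ ∂P, Tendsto (fun n => ∫ y, Θ y ∂(κ n σ)) atTop (nhds (∫ y, Θ y ∂ν)))
    {b : Set Y} (hb : ν (frontier b) = 0) :
    ∀ᵐ σ ∂P, Tendsto (fun n => κ n σ b) atTop (𝓝 (ν b)) := by
  have key : ∀ F : Set Y, IsClosed F →
      ∀ᵐ σ ∂P, limsup (fun n => κ n σ F) atTop ≤ ν F := by
    intro F hF
    have hall : ∀ᵐ σ ∂P, ∀ k, Tendsto (fun n => ∫ y, ((hF.apprSeq k y : ℝ≥0) : ℝ) ∂(κ n σ)) atTop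
        (𝓝 (∫ y, ((hF.apprSeq k y : ℝ≥0) : ℝ) ∂ν)) := by
      rw [ae_all_iff]
      intro k
      exact h2 ⟨⟨fun x => (hF.apprSeq k x).toReal,
        Continuous.comp' NNReal.continuous_coe (hF.apprSeq k).continuous⟩,
        (hF.apprSeq k).map_bounded'⟩
    filter_upwards [hall] with σ hσ
    exact limsup_closed_le_aux ν (fun n => κ n σ) hF hσ
  filter_upwards [key _ isClosed_closure, key _ (isOpen_interior (s := b)).isClosed_compl]
    with σ h1 h3
  exact tendsto_measure_of_le_liminf_measure_of_limsup_measure_le (μs := fun n => κ n σ)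
    interior_subset subset_closure hb
    (le_measure_liminf_of_limsup_measure_compl_le isOpen_interior.measurableSet h3) h1

/-- abstract decoupling principle behind Proposition 3.7.
Let `E, E'` be Polish spaces, `(Σ,𝒜,P)` a probability space, `μ, ν` Borel probability
measures on `E, E'`.  Let `X_n : Σ → E` be measurable and `κ_n` Markov kernels from `Σ`
to `E'` such that (i) the laws of `X_n` converge weakly to `μ` and (ii) for every bounded
continuous `Θ`, `∫ Θ dκ_n(σ,·) → ∫ Θ dν` for `P`-a.e. `σ`.  Then the measures `π_n` on
`E × E'` determined by `π_n(A × B) = ∫ 1_A(X_n(σ)) κ_n(σ,B) P(dσ)` converge weakly to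
the product `μ ⊗ ν`. -/
theorem stmt5 {E : Type*} [MeasurableSpace E] [TopologicalSpace E] [PolishSpace E]
    [BorelSpace E]
    {E' : Type*} [MeasurableSpace E'] [TopologicalSpace E'] [PolishSpace E'] [BorelSpace E']
    {S : Type*} [MeasurableSpace S] (P : Measure S) [IsProbabilityMeasure P]
    (μ : Measure E) [IsProbabilityMeasure μ] (ν : Measure E') [IsProbabilityMeasure ν]
    (X : ℕ → S → E) (hX : ∀ n, Measurable (X n))
    (κ : ℕ → Kernel S E') (hκ : ∀ n, IsMarkovKernel (κ n))
    (π : ℕ → Measure (E × E')) (hπprob : ∀ n, IsProbabilityMeasure (π n))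
    (hπ : ∀ (n : ℕ) (A : Set E) (B : Set E'), MeasurableSet A → MeasurableSet B →
      π n (A ×ˢ B) = ∫⁻ σ in (X n) ⁻¹' A, κ n σ B ∂P)
    (h1 : ∀ G : BoundedContinuousFunction E ℝ,
      Tendsto (fun n => ∫ σ, G (X n σ) ∂P) atTop (nhds (∫ x, G x ∂μ)))
    (h2 : ∀ Θ : BoundedContinuousFunction E' ℝ,
      ∀ᵐ σ ∂P, Tendsto (fun n => ∫ y, Θ y ∂(κ n σ)) atTop (nhds (∫ y, Θ y ∂ν))) :
    ∀ F : BoundedContinuousFunction (E × E') ℝ,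
      Tendsto (fun n => ∫ p, F p ∂(π n)) atTop (nhds (∫ p, F p ∂(μ.prod ν))) := by
  intro F
  let μ' : ProbabilityMeasure E := ⟨μ, inferInstance⟩
  let ν' : ProbabilityMeasure E' := ⟨ν, inferInstance⟩
  let L : ℕ → ProbabilityMeasure E :=
    fun n => ⟨P.map (X n), Measure.isProbabilityMeasure_map (hX n).aemeasurable⟩
  let p : ℕ → ProbabilityMeasure (E × E') := fun n => ⟨π n, hπprob n⟩
  have hL : Tendsto L atTop (𝓝 μ') := by
    rw [ProbabilityMeasure.tendsto_iff_forall_integral_tendsto]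
    intro G
    have hG : ∀ n, ∫ x, G x ∂(L n : Measure E) = ∫ σ, G (X n σ) ∂P := fun n =>
      integral_map (hX n).aemeasurable G.continuous.measurable.aestronglyMeasurable
    simp only [hG]
    exact h1 G
  suffices hp : Tendsto p atTop (𝓝 (μ'.prod ν')) from
    ProbabilityMeasure.tendsto_iff_forall_integral_tendsto.1 hp F
  let T : Set (Set (E × E')) := {t | ∃ (a : Set E) (b : Set E'),
    MeasurableSet a ∧ μ (frontier a) = 0 ∧ MeasurableSet b ∧ ν (frontier b) = 0
    ∧ t = a ×ˢ b}
  have hT : IsPiSystem T := by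
    rintro - ⟨a, b, ameas, ha, bmeas, hb, rfl⟩ - ⟨a', b', a'meas, ha', b'meas, hb', rfl⟩ -
    exact ⟨a ∩ a', b ∩ b', ameas.inter a'meas, null_frontier_inter ha ha',
      bmeas.inter b'meas, null_frontier_inter hb hb', prod_inter_prod⟩
  apply hT.tendsto_probabilityMeasure_of_tendsto_of_mem
  · rintro s ⟨a, b, ameas, -, bmeas, -, rfl⟩
    exact ameas.prod bmeas
  · let : PseudoMetricSpace E := TopologicalSpace.pseudoMetrizableSpacePseudoMetric E
    let : PseudoMetricSpace E' := TopologicalSpace.pseudoMetrizableSpacePseudoMetric E'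
    intro u u_open x xu
    obtain ⟨ε, εpos, hε⟩ : ∃ ε > 0, Metric.ball x ε ⊆ u := Metric.isOpen_iff.1 u_open x xu
    rcases exists_null_frontier_thickening μ {x.1} εpos with ⟨r, hr, μr⟩
    rcases exists_null_frontier_thickening ν {x.2} εpos with ⟨r', hr', μr'⟩
    simp only [Metric.thickening_singleton] at μr μr'
    refine ⟨Metric.ball x.1 r ×ˢ Metric.ball x.2 r', ⟨Metric.ball x.1 r, Metric.ball x.2 r',
      measurableSet_ball, μr, measurableSet_ball, μr', rfl⟩, ?_, ?_⟩
    · exact (Metric.isOpen_ball.prod Metric.isOpen_ball).mem_nhds (by simp [hr.1, hr'.1])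
    · calc Metric.ball x.1 r ×ˢ Metric.ball x.2 r'
      _ ⊆ Metric.ball x.1 ε ×ˢ Metric.ball x.2 ε := by gcongr; exacts [hr.2.le, hr'.2.le]
      _ ⊆ _ := by rwa [ball_prod_same]
  · rintro s ⟨a, b, ameas, ha, bmeas, hb, rfl⟩
    have hconv := ae_tendsto_kernel_aux P ν κ h2 hb
    have hLa : Tendsto (fun n => P.real (X n ⁻¹' a)) atTop (𝓝 (μ.real a)) := by
      have h := ProbabilityMeasure.tendsto_measure_of_null_frontier_of_tendsto' hL (E := a) ha
      have h' := (ENNReal.tendsto_toReal (measure_ne_top μ a)).comp h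
      refine h'.congr (fun n => ?_)
      simp only [Function.comp, L, ProbabilityMeasure.coe_mk, Measure.map_apply (hX n) ameas,
        Measure.real]
    have hmeas : ∀ n, Measurable (fun σ => (κ n σ).real b) := fun n =>
      ((κ n).measurable_coe bmeas).ennreal_toReal
    have hint : ∀ n, Integrable (fun σ => (κ n σ).real b) P := fun n =>
      Integrable.of_bound (hmeas n).aestronglyMeasurable 1 (Eventually.of_forall fun σ => by
        rw [Real.norm_of_nonneg measureReal_nonneg]; exact measureReal_le_one)
    have hD : Tendsto (fun n => ∫ σ, |(κ n σ).real b - ν.real b| ∂P) atTop (𝓝 0) := by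
      have := tendsto_integral_of_dominated_convergence (μ := P)
        (F := fun n σ => |(κ n σ).real b - ν.real b|) (f := fun _ => (0 : ℝ)) (fun _ => 1)
        (fun n => (((hmeas n).sub_const _).abs).aestronglyMeasurable) (integrable_const _)
        (fun n => Eventually.of_forall fun σ => by
          have h1 : (κ n σ).real b ≤ 1 := measureReal_le_one
          have h2 : ν.real b ≤ 1 := measureReal_le_one
          have h3 : 0 ≤ (κ n σ).real b := measureReal_nonneg
          have h4 : 0 ≤ ν.real b := measureReal_nonneg
          rw [Real.norm_eq_abs, abs_abs, abs_le]
          constructor <;> linarith)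
        (by
          filter_upwards [hconv] with σ hσ
          have h' := (ENNReal.tendsto_toReal (measure_ne_top ν b)).comp hσ
          have h'' := (h'.sub_const (ν.real b)).abs
          simpa [Measure.real] using h'')
      simpa using this
    have hπr : ∀ n, (π n).real (a ×ˢ b) = ∫ σ in X n ⁻¹' a, (κ n σ).real b ∂P := by
      intro n
      rw [Measure.real, hπ n a b ameas bmeas]
      exact (integral_toReal ((κ n).measurable_coe bmeas).aemeasurable
        (Eventually.of_forall fun σ => measure_lt_top _ _)).symm
    have hdiff : Tendsto (fun n => (π n).real (a ×ˢ b) - P.real (X n ⁻¹' a) * ν.real b)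
        atTop (𝓝 0) := by
      refine squeeze_zero_norm (fun n => ?_) hD
      have e : (π n).real (a ×ˢ b) - P.real (X n ⁻¹' a) * ν.real b
          = ∫ σ in X n ⁻¹' a, ((κ n σ).real b - ν.real b) ∂P := by
        rw [integral_sub (hint n).integrableOn (integrable_const _), hπr n]
        simp
      rw [e]
      refine (norm_integral_le_integral_norm _).trans ?_
      exact setIntegral_le_integral ((hint n).sub (integrable_const _)).norm
        (Eventually.of_forall fun σ => norm_nonneg _)
    have hfin : Tendsto (fun n => (π n).real (a ×ˢ b)) atTop (𝓝 (μ.real a * ν.real b)) := by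
      have := hdiff.add (hLa.mul_const (ν.real b))
      simpa using this
    rw [← NNReal.tendsto_coe]
    have hl : (((μ'.prod ν') (a ×ˢ b) : ℝ≥0) : ℝ) = μ.real a * ν.real b := by
      rw [ProbabilityMeasure.prod_prod, NNReal.coe_mul]
      rfl
    rw [hl]
    exact hfin
end

section
/- For every γ ∈ (0, 1/2) and every ε₀ > 0, the family of random variables {ξ_{γ,ε} : 0 < ε ≤ ε₀}, where ξ_{γ,ε} := sup_{x ∈ ℝ} |W_ε(x)| / (1+|x|)^{1−γ}, is tight: for every δ > 0 there exists M > 0 such that P(ξ_{γ,ε} ≥ M) ≤ δ for all ε ∈ (0, ε₀]. Indeed, there is a constant C′ (depending on γ, ε₀ and the parameters of the field c) with P(ξ_{γ,ε} ≥ M) ≤ C′/M² for all M > 0 and all ε ∈ (0, ε₀]. -/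
open MeasureTheory ProbabilityTheory Filter Set

/-- The σ-algebra `ℱ_x = σ(c(y) : y ≤ x)` generated by the field up to `x`. -/
def sigmaPast {S : Type*} [MeasurableSpace S] (c : ℝ → S → ℝ) (x : ℝ) : MeasurableSpace S :=
  ⨆ y ∈ Set.Iic x, MeasurableSpace.comap (c y) inferInstance

/-- The σ-algebra `ℱ^x = σ(c(y) : y ≥ x)` generated by the field from `x` on. -/
def sigmaFuture {S : Type*} [MeasurableSpace S] (c : ℝ → S → ℝ) (x : ℝ) : MeasurableSpace S :=
  ⨆ y ∈ Set.Ici x, MeasurableSpace.comap (c y) inferInstance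

/-- The φ-mixing coefficient
`φ(h) = sup { |P(B|A) − P(B)| : x ∈ ℝ, A ∈ ℱ_x, P(A) > 0, B ∈ ℱ^{x+h} }`. -/
noncomputable def phiMix {S : Type*} [MeasurableSpace S] (P : Measure S)
    (c : ℝ → S → ℝ) (h : ℝ) : ℝ :=
  sSup {d : ℝ | ∃ (x : ℝ) (A B : Set S), MeasurableSet[sigmaPast c x] A ∧
    MeasurableSet[sigmaFuture c (x + h)] B ∧ 0 < P A ∧
    d = |(P (A ∩ B)).toReal / (P A).toReal - (P B).toReal|}

/-- The rescaled field `W_ε(x) = (1/(c̄ √ε)) ∫₀ˣ c(y/ε) dy`. -/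
noncomputable def Weps {S : Type*} (c : ℝ → S → ℝ) (cbar ε x : ℝ) (σ : S) : ℝ :=
  (1 / (cbar * Real.sqrt ε)) * ∫ y in (0:ℝ)..x, c (y / ε) σ

/-- All the standing assumptions on the random field `c` from Section 2 of the paper:
joint measurability, stationarity, centering, boundedness in `L^∞`, integrable covariance
with `c̄² = ∫ E[c(0)c(x)] dx > 0`, and φ-mixing with `∫₀^∞ φ(h)^{1/2} dh < ∞`. -/
structure FieldHyps {S : Type*} [MeasurableSpace S] (P : Measure S)
    (c : ℝ → S → ℝ) (cbar : ℝ) : Prop where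
  meas : Measurable fun p : ℝ × S => c p.1 p.2
  stat : ∀ (h : ℝ) (n : ℕ) (x : Fin n → ℝ),
    Measure.map (fun σ => fun i => c (x i + h) σ) P =
      Measure.map (fun σ => fun i => c (x i) σ) P
  mean : ∫ σ, c 0 σ ∂P = 0
  bdd : ∃ K : ℝ, ∀ᵐ σ ∂P, |c 0 σ| ≤ K
  covInt : Integrable (fun x => ∫ σ, c 0 σ * c x σ ∂P) MeasureTheory.volume
  cbar_pos : 0 < cbar
  cbar_sq : cbar ^ 2 = ∫ x, ∫ σ, c 0 σ * c x σ ∂P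
  mix : IntegrableOn (fun h => Real.sqrt (phiMix P c h)) (Set.Ioi (0:ℝ))

section Helpers

variable {S : Type*} [MeasurableSpace S] {P : Measure S} [IsProbabilityMeasure P]
  {c : ℝ → S → ℝ} {cbar : ℝ}

lemma hc_meas_y (hc : FieldHyps P c cbar) (y : ℝ) : Measurable (c y) :=
  hc.meas.comp (measurable_const.prodMk measurable_id)

lemma hc_meas_s (hc : FieldHyps P c cbar) (s : S) : Measurable (fun y => c y s) :=
  hc.meas.comp (measurable_id.prodMk measurable_const)

lemma hc_bdd (hc : FieldHyps P c cbar) :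
    ∃ K : ℝ, 0 < K ∧ ∀ y, ∀ᵐ s ∂P, |c y s| ≤ K := by
  obtain ⟨K, hK⟩ := hc.bdd
  refine ⟨|K| + 1, by positivity, fun y => ?_⟩
  have h := hc.stat y 1 (fun _ => 0)
  have hp : MeasurableSet {v : Fin 1 → ℝ | |v 0| ≤ |K| + 1} :=
    measurableSet_le (by fun_prop) measurable_const
  have m1 : Measurable (fun σ => fun _ : Fin 1 => c (0 + y) σ) :=
    measurable_pi_lambda _ (fun _ => hc_meas_y hc _)
  have m0 : Measurable (fun σ => fun _ : Fin 1 => c 0 σ) :=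
    measurable_pi_lambda _ (fun _ => hc_meas_y hc _)
  have h0 : ∀ᵐ v ∂(Measure.map (fun σ => fun _ : Fin 1 => c 0 σ) P), |v 0| ≤ |K| + 1 := by
    rw [ae_map_iff m0.aemeasurable hp]
    filter_upwards [hK] with s hs
    linarith [le_abs_self K]
  rw [← h, ae_map_iff m1.aemeasurable hp] at h0
  simpa using h0

lemma hc_bdd' (hc : FieldHyps P c cbar) {K : ℝ} (hK : ∀ y, ∀ᵐ s ∂P, |c y s| ≤ K) :
    ∀ᵐ s ∂P, ∀ᵐ y : ℝ, |c y s| ≤ K := by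
  have hm : MeasurableSet {p : ℝ × S | |c p.1 p.2| ≤ K} :=
    measurableSet_le (by have := hc.meas; fun_prop) measurable_const
  exact (Measure.ae_ae_comm (μ := (volume : Measure ℝ)) (ν := P)
    (p := fun y s => |c y s| ≤ K) hm).1 (Filter.Eventually.of_forall hK)

lemma hc_cov (hc : FieldHyps P c cbar) (y z : ℝ) :
    ∫ s, c y s * c z s ∂P = ∫ s, c 0 s * c (z - y) s ∂P := by
  have h := hc.stat y 2 ![0, z - y]
  have m1 : Measurable (fun σ => fun i => c ((![0, z - y] : Fin 2 → ℝ) i + y) σ) :=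
    measurable_pi_lambda _ (fun _ => hc_meas_y hc _)
  have m0 : Measurable (fun σ => fun i => c ((![0, z - y] : Fin 2 → ℝ) i) σ) :=
    measurable_pi_lambda _ (fun _ => hc_meas_y hc _)
  have hf : ∀ μ : Measure (Fin 2 → ℝ), AEStronglyMeasurable (fun v : Fin 2 → ℝ => v 0 * v 1) μ :=
    fun μ => by
      have : Measurable (fun v : Fin 2 → ℝ => v 0 * v 1) := by fun_prop
      exact this.aestronglyMeasurable
  have e1 := integral_map (μ := P) m1.aemeasurable (hf _)
  have e0 := integral_map (μ := P) m0.aemeasurable (hf _)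
  rw [h, e0] at e1
  simpa using e1.symm

/-- partial integrals -/
noncomputable def II (c : ℝ → S → ℝ) (a b : ℝ) (s : S) : ℝ := ∫ y in a..b, c y s

lemma II_meas (hc : FieldHyps P c cbar) (a b : ℝ) : Measurable (II c a b) := by
  have h : ∀ u v : ℝ, Measurable (fun s => ∫ y in Set.Ioc u v, c y s) := fun u v => by
    have h1 : StronglyMeasurable (fun p : S × ℝ => c p.2 p.1) :=
      (hc.meas.comp measurable_swap).stronglyMeasurable
    exact (h1.integral_prod_right (ν := volume.restrict (Set.Ioc u v))).measurable
  unfold II intervalIntegral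
  exact (h a b).sub (h b a)

lemma II_int {s : S} {K : ℝ} (hc : FieldHyps P c cbar) (hs : ∀ᵐ y : ℝ, |c y s| ≤ K) (a b : ℝ) :
    IntervalIntegrable (fun y => c y s) volume a b := by
  rw [intervalIntegrable_iff]
  refine Measure.integrableOn_of_bounded (M := K) (by simp)
    (hc_meas_s hc s).aestronglyMeasurable ?_
  exact ae_restrict_of_ae hs

lemma II_bd {s : S} {K : ℝ} (hs : ∀ᵐ y : ℝ, |c y s| ≤ K) (a b : ℝ) :
    |II c a b s| ≤ K * |b - a| := by
  unfold II
  have := intervalIntegral.norm_integral_le_of_norm_le_const_ae (a := a) (b := b)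
    (f := fun y => c y s) (C := K) (hs.mono fun y hy _ => hy)
  simpa using this

lemma II_fubini (hc : FieldHyps P c cbar) {K : ℝ} (hK : ∀ y, ∀ᵐ s ∂P, |c y s| ≤ K)
    {a b : ℝ} (hab : a ≤ b) {Z : S → ℝ} (hZ : Measurable Z) {L : ℝ}
    (hL : ∀ᵐ s ∂P, |Z s| ≤ L) :
    ∫ s, Z s * II c a b s ∂P = ∫ y in Set.Ioc a b, ∫ s, Z s * c y s ∂P := by
  have h1 : ∀ s, Z s * II c a b s = ∫ y in Set.Ioc a b, Z s * c y s := fun s => by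
    rw [integral_const_mul, II, intervalIntegral.integral_of_le hab]
  simp_rw [h1]
  refine integral_integral_swap ?_
  have hm : Measurable (Function.uncurry fun (s : S) (y : ℝ) => Z s * c y s) :=
    (hZ.comp measurable_fst).mul (hc.meas.comp measurable_swap)
  refine Integrable.of_bound hm.aestronglyMeasurable (L * K) ?_
  have hm2 : MeasurableSet {p : S × ℝ | ‖Function.uncurry (fun (s : S) (y : ℝ) => Z s * c y s) p‖ ≤ L * K} :=
    measurableSet_le hm.norm measurable_const
  rw [Measure.ae_prod_iff_ae_ae hm2]
  filter_upwards [hL, hc_bdd' hc hK] with s h1 h2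
  filter_upwards [ae_restrict_of_ae h2] with y hy
  simp only [Function.uncurry, Real.norm_eq_abs, abs_mul]
  exact mul_le_mul h1 hy (abs_nonneg _) ((abs_nonneg _).trans h1)

lemma II_ae_bd (hc : FieldHyps P c cbar) {K : ℝ} (hK : ∀ y, ∀ᵐ s ∂P, |c y s| ≤ K)
    (a b : ℝ) : ∀ᵐ s ∂P, |II c a b s| ≤ K * |b - a| := by
  filter_upwards [hc_bdd' hc hK] with s h2
  exact II_bd h2 a b

lemma II_sq (hc : FieldHyps P c cbar) {K : ℝ} (hK : ∀ y, ∀ᵐ s ∂P, |c y s| ≤ K)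
    {a b : ℝ} (hab : a ≤ b) :
    ∫ s, II c a b s * II c a b s ∂P ≤ (∫ x, |∫ s, c 0 s * c x s ∂P|) * (b - a) := by
  set R : ℝ → ℝ := fun x => ∫ s, c 0 s * c x s ∂P with hR
  rw [II_fubini hc hK hab (II_meas hc a b) (II_ae_bd hc hK a b)]
  have key : ∀ y, ‖∫ s, II c a b s * c y s ∂P‖ ≤ ∫ x, |R x| := by
    intro y
    have e : ∫ s, II c a b s * c y s ∂P = ∫ z in Set.Ioc a b, R (z - y) := by
      simp_rw [mul_comm (II c a b _)]
      rw [II_fubini hc hK hab (hc_meas_y hc y) (hK y)]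
      refine integral_congr_ae (Filter.Eventually.of_forall fun z => ?_)
      exact hc_cov hc y z
    rw [e]
    have hRi : Integrable (fun z => R (z - y)) := hc.covInt.comp_sub_right y
    calc ‖∫ z in Set.Ioc a b, R (z - y)‖ ≤ ∫ z in Set.Ioc a b, ‖R (z - y)‖ :=
          norm_integral_le_integral_norm _
      _ ≤ ∫ z, ‖R (z - y)‖ := setIntegral_le_integral hRi.norm
          (Filter.Eventually.of_forall fun _ => norm_nonneg _)
      _ = ∫ z, |R z| := integral_sub_right_eq_self (fun z => ‖R z‖) y
  have := norm_setIntegral_le_of_norm_le_const (μ := volume) (s := Set.Ioc a b)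
    (f := fun y => ∫ s, II c a b s * c y s ∂P) (by simp) (fun y _ => key y)
  refine (le_abs_self _).trans (this.trans ?_)
  rw [Real.volume_real_Ioc_of_le hab]

lemma II_cheb (hc : FieldHyps P c cbar) {K : ℝ} (hK : ∀ y, ∀ᵐ s ∂P, |c y s| ≤ K)
    {a b : ℝ} (hab : a ≤ b) {l : ℝ} (hl : 0 < l) :
    P.real {s | l ≤ |II c a b s|} ≤ (∫ x, |∫ s, c 0 s * c x s ∂P|) * (b - a) / l ^ 2 := by
  have hi : Integrable (fun s => II c a b s * II c a b s) P := by
    refine Integrable.of_bound ((II_meas hc a b).mul (II_meas hc a b)).aestronglyMeasurable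
      ((K * |b - a|) * (K * |b - a|)) ?_
    filter_upwards [II_ae_bd hc hK a b] with s hs
    rw [norm_mul]
    exact mul_le_mul hs hs (abs_nonneg _) ((abs_nonneg _).trans hs)
  have := mul_meas_ge_le_integral_of_nonneg (μ := P)
    (Filter.Eventually.of_forall fun s => mul_self_nonneg (II c a b s)) hi (l ^ 2)
  have e : {s | l ^ 2 ≤ II c a b s * II c a b s} = {s | l ≤ |II c a b s|} := by
    ext s
    simp only [Set.mem_ofPred_eq]
    rw [← pow_two, sq_le_sq, abs_of_pos hl]
  rw [e] at this
  rw [le_div_iff₀ (by positivity), mul_comm]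
  exact this.trans (II_sq hc hK hab)

end Helpers

lemma II_version {S : Type*} {m : MeasurableSpace S} [mS : MeasurableSpace S] {P : Measure S}
    [IsProbabilityMeasure P] {c : ℝ → S → ℝ} {cbar : ℝ} (hm : m ≤ mS)
    (hc : FieldHyps P c cbar) {K : ℝ} (hK : ∀ y, ∀ᵐ s ∂P, |c y s| ≤ K)
    {a b : ℝ} (hab : a ≤ b) (hcm : ∀ y ∈ Set.Ioc a b, Measurable[m] (c y)) :
    ∃ Y : S → ℝ, Measurable[m] Y ∧ II c a b =ᵐ[P] Y := by
  set X := II c a b with hX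
  set L : NNReal := (K * |b - a|).toNNReal with hL
  have hXm : Measurable X := II_meas hc a b
  have hXb : ∀ᵐ s ∂P, |X s| ≤ L := by
    filter_upwards [II_ae_bd hc hK a b] with s hs
    exact hs.trans (Real.le_coe_toNNReal _)
  have hXi : Integrable X P := Integrable.of_bound hXm.aestronglyMeasurable L hXb
  set Y := P[X | m] with hY
  have hYs : StronglyMeasurable[m] Y := stronglyMeasurable_condExp
  have hYb : ∀ᵐ s ∂P, |Y s| ≤ L := ae_bdd_abs_condExp_of_ae_bdd_abs hXb
  have hYi : Integrable Y P := integrable_condExp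
  have hYm : Measurable Y := (hYs.mono hm).measurable
  refine ⟨Y, hYs.measurable, ?_⟩
  have orth : ∀ f : S → ℝ, Measurable[m] f → ∀ C : ℝ, (∀ᵐ s ∂P, |f s| ≤ C) →
      ∫ s, f s * (X s - Y s) ∂P = 0 := by
    intro f hf C hC
    have hfs : StronglyMeasurable[m] f := hf.stronglyMeasurable
    have h1 : P[f * X | m] =ᵐ[P] f * Y :=
      condExp_stronglyMeasurable_mul_of_bound hm hfs hXi C hC
    have hfX : Integrable (fun s => f s * X s) P :=
      hXi.bdd_mul (c := C) (hfs.mono hm).aestronglyMeasurable hC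
    have hfY : Integrable (fun s => f s * Y s) P :=
      hYi.bdd_mul (c := C) (hfs.mono hm).aestronglyMeasurable hC
    have h2 : ∫ s, f s * X s ∂P = ∫ s, f s * Y s ∂P := by
      have := integral_condExp (μ := P) (f := f * X) hm
      rw [integral_congr_ae h1] at this
      exact this.symm
    simp_rw [mul_sub]
    rw [integral_sub hfX hfY, h2, sub_self]
  set Z : S → ℝ := fun s => X s - Y s with hZ
  have hZm : Measurable Z := hXm.sub hYm
  have hZb : ∀ᵐ s ∂P, |Z s| ≤ L + L := by
    filter_upwards [hXb, hYb] with s h1 h2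
    exact (abs_sub _ _).trans (add_le_add h1 h2)
  have hZi : Integrable Z P := hXi.sub hYi
  have e1 : ∫ s, Z s * X s ∂P = 0 := by
    rw [hX, II_fubini hc hK hab hZm hZb]
    refine setIntegral_eq_zero_of_forall_eq_zero fun y hy => ?_
    simp_rw [mul_comm (Z _)]
    exact orth (c y) (hcm y hy) K (hK y)
  have e2 : ∫ s, Z s * Y s ∂P = 0 := by
    simp_rw [mul_comm (Z _)]
    exact orth Y hYs.measurable L hYb
  have i1 : Integrable (fun s => Z s * X s) P :=
    hXi.bdd_mul (c := L + L) hZm.aestronglyMeasurable hZb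
  have i2 : Integrable (fun s => Z s * Y s) P :=
    hYi.bdd_mul (c := L + L) hZm.aestronglyMeasurable hZb
  have e3 : ∫ s, Z s * X s - Z s * Y s ∂P = 0 := by
    rw [integral_sub i1 i2, e1, e2, sub_self]
  have e4 := (integral_eq_zero_iff_of_nonneg (μ := P)
    (f := fun s => Z s * X s - Z s * Y s) (fun s => by
      simp only [Pi.zero_apply, ← mul_sub]; exact mul_self_nonneg (Z s)) (i1.sub i2)).1 e3
  filter_upwards [e4] with s hs
  simp only [Pi.zero_apply, ← mul_sub] at hs
  exact sub_eq_zero.1 (mul_self_eq_zero.1 hs)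

lemma mix_ineq {S : Type*} [mS : MeasurableSpace S] {P : Measure S}
    [IsProbabilityMeasure P] {c : ℝ → S → ℝ} {h x : ℝ} {A B : Set S}
    (hA : MeasurableSet[sigmaPast c x] A) (hB : MeasurableSet[sigmaFuture c (x + h)] B) :
    P.real (A ∩ B) ≤ P.real A * (P.real B + phiMix P c h) := by
  by_cases h0 : P A = 0
  · have : P (A ∩ B) = 0 := measure_mono_null Set.inter_subset_left h0
    simp [Measure.real, h0, this]
  have hpos : 0 < P A := pos_iff_ne_zero.2 h0
  have hb : BddAbove {d : ℝ | ∃ (x : ℝ) (A B : Set S), MeasurableSet[sigmaPast c x] A ∧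
    MeasurableSet[sigmaFuture c (x + h)] B ∧ 0 < P A ∧
    d = |(P (A ∩ B)).toReal / (P A).toReal - (P B).toReal|} := by
    refine ⟨1, ?_⟩
    rintro d ⟨x, A, B, -, -, hp, rfl⟩
    have hA0 : 0 ≤ P.real (A ∩ B) / P.real A := by positivity
    have hA1 : P.real (A ∩ B) / P.real A ≤ 1 :=
      div_le_one_of_le₀ (measureReal_mono Set.inter_subset_left) measureReal_nonneg
    have hB0 : 0 ≤ P.real B := measureReal_nonneg
    have hB1 : P.real B ≤ 1 := measureReal_le_one
    exact abs_le.2 ⟨by change -1 ≤ P.real (A ∩ B) / P.real A - P.real B; linarith,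
      by change P.real (A ∩ B) / P.real A - P.real B ≤ 1; linarith⟩
  have h1 : |P.real (A ∩ B) / P.real A - P.real B| ≤ phiMix P c h :=
    le_csSup hb ⟨x, A, B, hA, hB, hpos, rfl⟩
  have h2 := (abs_le.1 h1).2
  have hp : 0 < P.real A := ENNReal.toReal_pos h0 (measure_ne_top _ _)
  have h3 : P.real (A ∩ B) / P.real A ≤ P.real B + phiMix P c h := by linarith
  rw [div_le_iff₀ hp] at h3
  linarith

lemma exists_gap {S : Type*} [mS : MeasurableSpace S] {P : Measure S}
    [IsProbabilityMeasure P] {c : ℝ → S → ℝ} {cbar : ℝ} (hc : FieldHyps P c cbar) :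
    ∃ m : ℝ, 0 < m ∧ phiMix P c m ≤ 1 / 4 := by
  by_contra! hcon
  have h := hc.mix
  have h2 : IntegrableOn (fun _ : ℝ => (1 / 2 : ℝ)) (Set.Ioi 0) := by
    refine Integrable.mono' h (by fun_prop) ?_
    refine (ae_restrict_iff' measurableSet_Ioi).2 (Filter.Eventually.of_forall fun x hx => ?_)
    rw [Real.norm_eq_abs, abs_of_pos (by norm_num)]
    refine Real.le_sqrt_of_sq_le ?_
    have := hcon x hx
    norm_num at this ⊢
    linarith
  rw [integrableOn_const_iff] at h2
  simp at h2

/-- Ottaviani's inequality, abstract form. -/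
lemma ottaviani {S : Type*} [mS : MeasurableSpace S] {P : Measure S}
    [IsProbabilityMeasure P] (X : ℕ → S → ℝ) (hX : ∀ k, Measurable (X k)) (n : ℕ) (l : ℝ)
    (hl : 0 < l) (A : ℕ → Set S)
    (hA : ∀ k, A k = {s | 3 * l ≤ |X k s| ∧ ∀ j < k, |X j s| < 3 * l})
    (hstep : ∀ k < n, ∀ᵐ s ∂P, |X (k + 1) s - X k s| ≤ l)
    (hmix : ∀ k < n, P.real (A k ∩ {s | l ≤ |X n s - X (k + 1) s|}) ≤ P.real (A k) * (1 / 2)) :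
    P.real {s | ∃ k ≤ n, 3 * l ≤ |X k s|} ≤ 2 * P.real {s | l ≤ |X n s|} := by
  classical
  set E := {s | ∃ k ≤ n, 3 * l ≤ |X k s|} with hE
  set F := {s | l ≤ |X n s|} with hF
  have hAm : ∀ k, MeasurableSet (A k) := by
    intro k
    rw [hA k]
    have : {s | 3 * l ≤ |X k s| ∧ ∀ j < k, |X j s| < 3 * l}
        = {s | 3 * l ≤ |X k s|} ∩ ⋂ j, ⋂ (_ : j < k), {s | |X j s| < 3 * l} := by
      ext s; simp
    rw [this]
    refine (measurableSet_le measurable_const (hX k).abs).inter ?_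
    exact MeasurableSet.iInter fun j => MeasurableSet.iInter fun _ =>
      measurableSet_lt (hX j).abs measurable_const
  have hEU : E = ⋃ k ∈ Finset.range (n + 1), A k := by
    ext s
    simp only [hE, Set.mem_ofPred_eq, Set.mem_iUnion, Finset.mem_range, exists_prop, hA]
    constructor
    · intro h
      have h' : ∃ k, 3 * l ≤ |X k s| := ⟨_, h.choose_spec.2⟩
      refine ⟨Nat.find h', ?_, Nat.find_spec h', fun j hj => not_le.1 (Nat.find_min h' hj)⟩
      obtain ⟨k, hk, hk2⟩ := h
      have := Nat.find_min' h' hk2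
      omega
    · rintro ⟨k, hk, hk2, -⟩
      exact ⟨k, by omega, hk2⟩
  have hdisj : (↑(Finset.range (n + 1)) : Set ℕ).PairwiseDisjoint A := by
    intro i _ j _ hij
    rw [Function.onFun, Set.disjoint_left]
    intro s hi hj
    simp only [hA, Set.mem_ofPred_eq] at hi hj
    rcases lt_or_gt_of_ne hij with h | h
    · exact absurd (hj.2 i h) (not_lt.2 hi.1)
    · exact absurd (hi.2 j h) (not_lt.2 hj.1)
  have hsum : P.real E = ∑ k ∈ Finset.range (n + 1), P.real (A k) := by
    rw [hEU]
    exact measureReal_biUnion_finset hdisj (fun k _ => hAm k)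
  have hterm : ∀ k ∈ Finset.range (n + 1), P.real (A k ∩ Fᶜ) ≤ P.real (A k) * (1 / 2) := by
    intro k hk
    rcases Nat.lt_or_ge k n with h | h
    · refine le_trans ?_ (hmix k h)
      refine ENNReal.toReal_mono (measure_ne_top _ _) (measure_mono_ae ?_)
      filter_upwards [hstep k h] with s hs
      rintro ⟨h1, h2⟩
      refine ⟨h1, ?_⟩
      rw [hA] at h1
      have h3 : |X n s| < l := not_le.1 h2
      have h4 : 3 * l ≤ |X k s| := h1.1
      change l ≤ |X n s - X (k + 1) s|
      have h5 : |X k s| ≤ |X n s| + |X n s - X (k + 1) s| + |X (k + 1) s - X k s| := by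
        have e : X k s = X n s - (X n s - X (k + 1) s) - (X (k + 1) s - X k s) := by ring
        calc |X k s| = |X n s - (X n s - X (k + 1) s) - (X (k + 1) s - X k s)| := by rw [← e]
          _ ≤ _ := (abs_sub _ _).trans (add_le_add_left (abs_sub _ _) _)
      linarith
    · have hkn : k = n := by have := Finset.mem_range.1 hk; omega
      have : A k ∩ Fᶜ = ∅ := by
        ext s
        simp only [Set.mem_inter_iff, Set.mem_compl_iff, Set.mem_empty_iff_false, iff_false,
          not_and, not_not, hA, hF, Set.mem_ofPred_eq, hkn]
        rintro ⟨h1, -⟩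
        linarith
      rw [this]
      simp
  have hle : P.real E ≤ P.real F + ∑ k ∈ Finset.range (n + 1), P.real (A k ∩ Fᶜ) := by
    have hsub : E ⊆ F ∪ ⋃ k ∈ Finset.range (n + 1), (A k ∩ Fᶜ) := by
      intro s hs
      by_cases hF' : s ∈ F
      · exact Or.inl hF'
      · right
        rw [hEU] at hs
        simp only [Set.mem_iUnion] at hs ⊢
        obtain ⟨k, hk, hk2⟩ := hs
        exact ⟨k, hk, hk2, hF'⟩
    refine (measureReal_mono hsub (measure_ne_top _ _)).trans
      ((measureReal_union_le _ _).trans ?_)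
    gcongr
    exact measureReal_biUnion_finset_le _ _
  have := Finset.sum_le_sum hterm
  rw [← Finset.sum_mul, ← hsum] at this
  linarith

lemma sigmaPast_le {S : Type*} [mS : MeasurableSpace S] {c : ℝ → S → ℝ}
    (h : ∀ y, Measurable (c y)) (x : ℝ) : sigmaPast c x ≤ mS :=
  iSup₂_le fun y _ => (h y).comap_le

lemma sigmaFuture_le {S : Type*} [mS : MeasurableSpace S] {c : ℝ → S → ℝ}
    (h : ∀ y, Measurable (c y)) (x : ℝ) : sigmaFuture c x ≤ mS :=
  iSup₂_le fun y _ => (h y).comap_le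

lemma sigmaPast_mono {S : Type*} [mS : MeasurableSpace S] {c : ℝ → S → ℝ} {x y : ℝ}
    (h : x ≤ y) : sigmaPast c x ≤ sigmaPast c y :=
  iSup₂_le fun z hz => le_iSup₂_of_le z (le_trans hz h) le_rfl

lemma meas_past {S : Type*} [mS : MeasurableSpace S] (c : ℝ → S → ℝ) {x y : ℝ}
    (h : y ≤ x) : Measurable[sigmaPast c x] (c y) :=
  Measurable.of_comap_le (le_iSup₂_of_le (f := fun y (_ : y ∈ Set.Iic x) =>
    MeasurableSpace.comap (c y) inferInstance) y h le_rfl)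

lemma meas_future {S : Type*} [mS : MeasurableSpace S] (c : ℝ → S → ℝ) {x y : ℝ}
    (h : x ≤ y) : Measurable[sigmaFuture c x] (c y) :=
  Measurable.of_comap_le (le_iSup₂_of_le (f := fun y (_ : y ∈ Set.Ici x) =>
    MeasurableSpace.comap (c y) inferInstance) y h le_rfl)

lemma meas_first {S : Type*} {m : MeasurableSpace S} (Y : ℕ → S → ℝ) (k : ℕ) (l : ℝ)
    (h : ∀ j ≤ k, Measurable (Y j)) :
    MeasurableSet {s | 3 * l ≤ |Y k s| ∧ ∀ j < k, |Y j s| < 3 * l} := by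
  have : {s | 3 * l ≤ |Y k s| ∧ ∀ j < k, |Y j s| < 3 * l}
      = {s | 3 * l ≤ |Y k s|} ∩ ⋂ j, ⋂ (_ : j < k), {s | |Y j s| < 3 * l} := by
    ext s; simp
  rw [this]
  refine (measurableSet_le measurable_const (h k le_rfl).abs).inter ?_
  exact MeasurableSet.iInter fun j => MeasurableSet.iInter fun hj =>
    measurableSet_lt (h j hj.le).abs measurable_const

lemma II_add {S : Type*} [mS : MeasurableSpace S] {P : Measure S}
    [IsProbabilityMeasure P] {c : ℝ → S → ℝ} {cbar : ℝ} (hc : FieldHyps P c cbar) {K : ℝ}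
    {s : S} (hs : ∀ᵐ y : ℝ, |c y s| ≤ K) (a b d : ℝ) :
    II c a d s = II c a b s + II c b d s :=
  (intervalIntegral.integral_add_adjacent_intervals (II_int hc hs a b) (II_int hc hs b d)).symm

lemma maxi_good {S : Type*} [mS : MeasurableSpace S] {P : Measure S}
    [IsProbabilityMeasure P] {c : ℝ → S → ℝ} {cbar : ℝ} (hc : FieldHyps P c cbar) {K : ℝ}
    (hK : ∀ y, ∀ᵐ s ∂P, |c y s| ≤ K) {m : ℝ} (hm : 0 < m) (hphi : phiMix P c m ≤ 1 / 4)
    (a : ℝ) (n : ℕ) (l : ℝ) (hl : 0 < l) (hKm : K * m ≤ l)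
    (hl2 : 4 * ((∫ x, |∫ s, c 0 s * c x s ∂P|) * (n * m)) ≤ l ^ 2) :
    P.real {s | ∃ k : ℕ, k ≤ n ∧ 3 * l ≤ |II c a (a + k * m) s|} ≤
      2 * ((∫ x, |∫ s, c 0 s * c x s ∂P|) * (n * m) / l ^ 2) := by
  set R := ∫ x, |∫ s, c 0 s * c x s ∂P| with hR
  have hR0 : 0 ≤ R := integral_nonneg fun _ => abs_nonneg _
  have hcy := hc_meas_y hc
  set X : ℕ → S → ℝ := fun k => II c a (a + k * m) with hX
  have hgood := hc_bdd' hc hK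
  have hdiff : ∀ i j : ℕ, ∀ᵐ s ∂P, X j s - X i s = II c (a + i * m) (a + j * m) s := by
    intro i j
    filter_upwards [hgood] with s hs
    simp only [hX]
    rw [II_add hc hs a (a + i * m) (a + j * m)]
    ring
  refine (ottaviani (P := P) X (fun k => II_meas hc _ _) n l hl _ (fun k => rfl) ?_ ?_).trans ?_
  · intro k _
    filter_upwards [hdiff k (k + 1), hgood] with s h1 h2
    rw [h1]
    refine (II_bd h2 _ _).trans ?_
    have : a + ((k + 1 : ℕ) : ℝ) * m - (a + k * m) = m := by push_cast; ring
    rw [this, abs_of_pos hm]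
    exact hKm
  · intro k hk
    have hkm : ∀ i j : ℕ, i ≤ j → a + (i : ℝ) * m ≤ a + j * m := fun i j hij => by
      have : (i : ℝ) ≤ j := by exact_mod_cast hij
      gcongr
    have hY : ∀ j : ℕ, ∃ Y : S → ℝ, Measurable[sigmaPast c (a + j * m)] Y ∧ X j =ᵐ[P] Y :=
      fun j => II_version (sigmaPast_le hcy _) hc hK
        (by have := hkm 0 j (Nat.zero_le _); simpa using this)
        (fun y hy => meas_past c hy.2)
    choose Y hYm hYe using hY
    obtain ⟨D, hDm, hDe⟩ := II_version (P := P) (a := a + ((k + 1 : ℕ) : ℝ) * m)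
      (b := a + (n : ℝ) * m)
      (sigmaFuture_le hcy (a + ((k + 1 : ℕ) : ℝ) * m)) hc hK (hkm _ _ hk)
      (fun y hy => meas_future c hy.1.le)
    have hAm : MeasurableSet[sigmaPast c (a + k * m)]
        {s | 3 * l ≤ |Y k s| ∧ ∀ j < k, |Y j s| < 3 * l} :=
      meas_first (m := sigmaPast c (a + k * m)) Y k l
        (fun j hj => (hYm j).mono (sigmaPast_mono (hkm _ _ hj)) le_rfl)
    have hBm : MeasurableSet[sigmaFuture c (a + k * m + m)] {s | l ≤ |D s|} := by
      have e : a + k * m + m = a + ((k + 1 : ℕ) : ℝ) * m := by push_cast; ring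
      rw [e]
      have : Measurable[sigmaFuture c (a + ((k + 1 : ℕ) : ℝ) * m)] (fun s => |D s|) :=
        measurable_norm.comp hDm
      exact this measurableSet_Ici
    have hmixi := mix_ineq (P := P) hAm hBm
    have hXY : ∀ᵐ s ∂P, ∀ j, X j s = Y j s := ae_all_iff.2 hYe
    have eA : {s | 3 * l ≤ |X k s| ∧ ∀ j < k, |X j s| < 3 * l} =ᵐ[P]
        {s | 3 * l ≤ |Y k s| ∧ ∀ j < k, |Y j s| < 3 * l} := by
      filter_upwards [hXY] with s hs
      refine propext ?_
      change (3 * l ≤ |X k s| ∧ ∀ j < k, |X j s| < 3 * l) ↔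
        (3 * l ≤ |Y k s| ∧ ∀ j < k, |Y j s| < 3 * l)
      simp only [hs]
    have eB : {s | l ≤ |X n s - X (k + 1) s|} =ᵐ[P] {s | l ≤ |D s|} := by
      filter_upwards [hDe, hdiff (k + 1) n] with s hs h2
      refine propext ?_
      change l ≤ |X n s - X (k + 1) s| ↔ l ≤ |D s|
      rw [h2, hs]
    have eB' : {s | l ≤ |II c (a + ((k + 1 : ℕ) : ℝ) * m) (a + (n : ℝ) * m) s|} =ᵐ[P]
        {s | l ≤ |D s|} := by
      filter_upwards [hDe] with s hs
      refine propext ?_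
      change l ≤ |II c (a + ((k + 1 : ℕ) : ℝ) * m) (a + (n : ℝ) * m) s| ↔ l ≤ |D s|
      rw [hs]
    have hPB : P.real {s | l ≤ |D s|} ≤ 1 / 4 := by
      rw [← measureReal_congr eB']
      refine (II_cheb hc hK (hkm _ _ hk) hl).trans ?_
      rw [div_le_iff₀ (by positivity)]
      have h1 : a + (n : ℝ) * m - (a + ((k + 1 : ℕ) : ℝ) * m) ≤ n * m := by
        have : 0 ≤ ((k + 1 : ℕ) : ℝ) * m := by positivity
        linarith
      have := mul_le_mul_of_nonneg_left h1 hR0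
      linarith
    rw [measureReal_congr (eA.inter eB), measureReal_congr eA]
    refine hmixi.trans ?_
    refine mul_le_mul_of_nonneg_left ?_ measureReal_nonneg
    linarith
  · have := II_cheb hc hK (a := a) (b := a + n * m)
      (by have : 0 ≤ (n : ℝ) * m := by positivity
          linarith) hl
    rw [show a + n * m - a = n * m by ring] at this
    linarith

lemma maxi {S : Type*} [mS : MeasurableSpace S] {P : Measure S}
    [IsProbabilityMeasure P] {c : ℝ → S → ℝ} {cbar : ℝ} (hc : FieldHyps P c cbar) {K : ℝ}
    (hK0 : 0 < K)
    (hK : ∀ y, ∀ᵐ s ∂P, |c y s| ≤ K) {m : ℝ} (hm : 0 < m) (hphi : phiMix P c m ≤ 1 / 4) :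
    ∃ D : ℝ, 0 < D ∧ ∀ (a : ℝ) (n : ℕ) (l : ℝ), 0 < n → 0 < l →
      P {s | ∃ x ∈ Set.Icc a (a + n * m), 4 * l ≤ |II c a x s|} ≤
        ENNReal.ofReal (D * n / l ^ 2) := by
  set R := ∫ x, |∫ s, c 0 s * c x s ∂P| with hR
  have hR0 : 0 ≤ R := integral_nonneg fun _ => abs_nonneg _
  refine ⟨4 * (R * m) + (K * m) ^ 2, by positivity, fun a n l hn hl => ?_⟩
  have hn1 : (1 : ℝ) ≤ n := by exact_mod_cast hn
  have hKmp : 0 < K * m := by positivity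
  have hRm : 0 ≤ R * m := by positivity
  by_cases h1 : K * m ≤ l ∧ 4 * (R * (n * m)) ≤ l ^ 2
  · have h := maxi_good hc hK hm hphi a n l hl h1.1 h1.2
    have hsub : P {s | ∃ x ∈ Set.Icc a (a + n * m), 4 * l ≤ |II c a x s|} ≤
        P {s | ∃ k : ℕ, k ≤ n ∧ 3 * l ≤ |II c a (a + k * m) s|} := by
      refine measure_mono_ae ?_
      filter_upwards [hc_bdd' hc hK] with s hs
      rintro ⟨x, hx, hx2⟩
      have hx0 : 0 ≤ (x - a) / m := div_nonneg (by linarith [hx.1]) hm.le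
      have f1 := Nat.floor_le hx0
      have f2 := Nat.lt_floor_add_one ((x - a) / m)
      rw [le_div_iff₀ hm] at f1
      rw [div_lt_iff₀ hm] at f2
      refine ⟨⌊(x - a) / m⌋₊, ?_, ?_⟩
      · refine Nat.floor_le_of_le ?_
        rw [div_le_iff₀ hm]
        linarith [hx.2]
      · set k := ⌊(x - a) / m⌋₊
        have e := II_add hc hs a (a + k * m) x
        have b := II_bd hs (a + k * m) x
        have hb : K * |x - (a + k * m)| ≤ K * m := by
          refine mul_le_mul_of_nonneg_left ?_ hK0.le
          rw [abs_le]
          constructor <;> linarith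
        have := abs_add_le (II c a (a + k * m) s) (II c (a + k * m) x s)
        rw [← e] at this
        linarith [h1.1]
    refine hsub.trans ?_
    rw [← ofReal_measureReal]
    refine ENNReal.ofReal_le_ofReal (h.trans ?_)
    rw [← mul_div_assoc]
    refine div_le_div_of_nonneg_right ?_ (sq_nonneg l)
    have t1 : 0 ≤ R * m * n := by positivity
    have t2 : 0 ≤ (K * m) ^ 2 * n := by positivity
    calc 2 * (R * (n * m)) = 2 * (R * m * n) := by ring
      _ ≤ 4 * (R * m * n) + (K * m) ^ 2 * n := by linarith
      _ = _ := by ring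
  · refine prob_le_one.trans ?_
    rw [← ENNReal.ofReal_one]
    refine ENNReal.ofReal_le_ofReal ?_
    rw [le_div_iff₀ (by positivity), one_mul]
    have t1 : 0 ≤ 4 * (R * m) * n := by positivity
    have t2 : (K * m) ^ 2 ≤ (K * m) ^ 2 * n := le_mul_of_one_le_right (by positivity) hn1
    rw [not_and_or, not_le, not_le] at h1
    rcases h1 with h1 | h1
    · have : l ^ 2 ≤ (K * m) ^ 2 := by gcongr
      nlinarith
    · nlinarith [sq_nonneg (K * m)]
/-- Lemma 4.1: tightness of `ξ_{γ,ε}`.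
Under the standing assumptions on the field `c`, for every `γ ∈ (0,1/2)` and `ε₀ > 0` the
family `ξ_{γ,ε} = sup_{x∈ℝ} |W_ε(x)|/(1+|x|)^{1−γ}`, `0 < ε ≤ ε₀`, is tight; indeed there
is a constant `C′` with `P(ξ_{γ,ε} ≥ M) ≤ C′/M²` for all `M > 0` and all `ε ∈ (0,ε₀]`. -/
theorem stmt9 {S : Type*} [MeasurableSpace S] (P : Measure S) [IsProbabilityMeasure P]
    (c : ℝ → S → ℝ) (cbar : ℝ) (hc : FieldHyps P c cbar)
    (γ : ℝ) (hγ : γ ∈ Set.Ioo (0:ℝ) (1/2)) (ε₀ : ℝ) (hε₀ : 0 < ε₀) :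
    (∀ δ : ℝ, 0 < δ → ∃ M : ℝ, 0 < M ∧ ∀ ε ∈ Set.Ioc (0:ℝ) ε₀,
      P {σ | ENNReal.ofReal M ≤
          ⨆ x : ℝ, ENNReal.ofReal (|Weps c cbar ε x σ| / (1 + |x|) ^ (1 - γ))} ≤
        ENNReal.ofReal δ) ∧
    ∃ C' : ℝ, ∀ M : ℝ, 0 < M → ∀ ε ∈ Set.Ioc (0:ℝ) ε₀,
      P {σ | ENNReal.ofReal M ≤
          ⨆ x : ℝ, ENNReal.ofReal (|Weps c cbar ε x σ| / (1 + |x|) ^ (1 - γ))} ≤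
        ENNReal.ofReal (C' / M ^ 2) := by
  have hmain : ∃ C' : ℝ, ∀ M : ℝ, 0 < M → ∀ ε ∈ Set.Ioc (0:ℝ) ε₀,
      P {σ | ENNReal.ofReal M ≤
          ⨆ x : ℝ, ENNReal.ofReal (|Weps c cbar ε x σ| / (1 + |x|) ^ (1 - γ))} ≤
        ENNReal.ofReal (C' / M ^ 2) := by
    obtain ⟨K, hK0, hK⟩ := hc_bdd hc
    obtain ⟨m, hm, hphi⟩ := exists_gap hc
    obtain ⟨D, hD, hmax⟩ := maxi hc hK0 hK hm hphi
    have hcb := hc.cbar_pos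
    set r : ℝ := (2 : ℝ) ^ (2 * γ - 1) with hr
    have hr0 : 0 < r := by positivity
    have hr1 : r < 1 := Real.rpow_lt_one_of_one_lt_of_neg (by norm_num) (by linarith [hγ.2])
    set C0 : ℝ := D * 256 * (4 / m + ε₀) / cbar ^ 2 with hC0
    have hC0p : 0 < C0 := by positivity
    refine ⟨C0 * (1 - r)⁻¹, fun M hM ε hε => ?_⟩
    have hε0 : 0 < ε := hε.1
    have hse : 0 < Real.sqrt ε := Real.sqrt_pos.2 hε0
    have hss : Real.sqrt ε * Real.sqrt ε = ε := Real.mul_self_sqrt hε0.le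
    set q : ℕ → ℝ := fun j => ((2 : ℝ) ^ j) ^ (1 - γ) with hq
    have hqp : ∀ j, 0 < q j := fun j => by positivity
    set a : ℕ → ℝ := fun j => -(2 ^ (j + 1) / ε) with ha
    set n : ℕ → ℕ := fun j => ⌈(2 : ℝ) ^ (j + 2) / (ε * m)⌉₊ with hn
    set l : ℕ → ℝ := fun j => cbar * M * q j / (16 * Real.sqrt ε) with hl
    have hlp : ∀ j, 0 < l j := fun j => by have := hqp j; positivity
    have hnp : ∀ j, 0 < n j := fun j => Nat.ceil_pos.2 (by positivity)
    have hbound : ∀ j, D * (n j) / (l j) ^ 2 ≤ C0 / M ^ 2 * r ^ j := by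
      intro j
      have h1 : (n j : ℝ) < 2 ^ (j + 2) / (ε * m) + 1 := Nat.ceil_lt_add_one (by positivity)
      have h2j : (1 : ℝ) ≤ 2 ^ j := one_le_pow₀ (by norm_num)
      have h2 : (n j : ℝ) * ε ≤ 2 ^ j * (4 / m + ε₀) := by
        have e : ((2 : ℝ) ^ (j + 2) / (ε * m) + 1) * ε = 2 ^ j * (4 / m) + ε := by
          rw [pow_add]; field_simp; ring
        have h3 : (n j : ℝ) * ε ≤ (2 ^ (j + 2) / (ε * m) + 1) * ε :=
          mul_le_mul_of_nonneg_right h1.le hε0.le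
        have h4 : ε ≤ 2 ^ j * ε₀ := hε.2.trans (le_mul_of_one_le_left hε₀.le h2j)
        rw [e] at h3
        linarith
      have hrq : (2 : ℝ) ^ j = r ^ j * (q j) ^ 2 := by
        have e1 : q j = (2 : ℝ) ^ ((j : ℝ) * (1 - γ)) := by
          simp only [hq]
          rw [← Real.rpow_natCast, ← Real.rpow_mul (by norm_num)]
        have e2 : r ^ j = (2 : ℝ) ^ ((2 * γ - 1) * j) := by
          rw [← Real.rpow_natCast, hr, ← Real.rpow_mul (by norm_num)]
        rw [e1, e2, pow_two, ← Real.rpow_add (by norm_num), ← Real.rpow_add (by norm_num),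
          ← Real.rpow_natCast]
        congr 1
        ring
      have hl2 : (l j) ^ 2 = cbar ^ 2 * M ^ 2 * (q j) ^ 2 / (256 * ε) := by
        simp only [hl]
        rw [div_pow, mul_pow, mul_pow, mul_pow, Real.sq_sqrt hε0.le]
        norm_num
      have hqj := hqp j
      have e1 : D * (n j) / (l j) ^ 2
          = D * 256 / (cbar ^ 2 * M ^ 2 * (q j) ^ 2) * (n j * ε) := by
        rw [hl2]; field_simp
      have e2 : C0 / M ^ 2 * r ^ j
          = D * 256 / (cbar ^ 2 * M ^ 2 * (q j) ^ 2) * (2 ^ j * (4 / m + ε₀)) := by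
        rw [hrq, hC0]; field_simp
      rw [e1, e2]
      exact mul_le_mul_of_nonneg_left h2 (by positivity)
    have hsub : P {σ | ENNReal.ofReal M ≤
          ⨆ x : ℝ, ENNReal.ofReal (|Weps c cbar ε x σ| / (1 + |x|) ^ (1 - γ))} ≤
        P (⋃ j, {s | ∃ x ∈ Set.Icc (a j) (a j + n j * m), 4 * l j ≤ |II c (a j) x s|}) := by
      refine measure_mono_ae ?_
      filter_upwards [hc_bdd' hc hK] with s hs
      intro hM2
      have hM3 : ENNReal.ofReal (M / 2) <
          ⨆ x : ℝ, ENNReal.ofReal (|Weps c cbar ε x s| / (1 + |x|) ^ (1 - γ)) :=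
        lt_of_lt_of_le ((ENNReal.ofReal_lt_ofReal_iff hM).2 (by linarith)) hM2
      obtain ⟨x, hx⟩ := lt_iSup_iff.1 hM3
      have hx1 := (ENNReal.ofReal_lt_ofReal_iff_of_nonneg (by positivity)).1 hx
      have hxp : 0 < 1 + |x| := by positivity
      rw [lt_div_iff₀ (by positivity)] at hx1
      obtain ⟨j, hj1, hj2⟩ := exists_nat_pow_near (x := 1 + |x|) (y := (2 : ℝ))
        (by linarith [abs_nonneg x]) (by norm_num)
      have hqx : q j ≤ (1 + |x|) ^ (1 - γ) :=
        Real.rpow_le_rpow (by positivity) hj1 (by linarith [hγ.2])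
      have hW : Weps c cbar ε x s = Real.sqrt ε / cbar * II c 0 (x / ε) s := by
        unfold Weps II
        rw [intervalIntegral.integral_comp_div (fun y => c y s) hε0.ne', zero_div, smul_eq_mul,
          ← mul_assoc]
        congr 1
        field_simp
        nlinarith [hss]
      have h8 : 8 * l j ≤ |II c 0 (x / ε) s| := by
        have hcp : 0 < Real.sqrt ε / cbar := by positivity
        rw [hW, abs_mul, abs_of_pos hcp] at hx1
        have h1 : M / 2 * q j ≤ Real.sqrt ε / cbar * |II c 0 (x / ε) s| :=
          (mul_le_mul_of_nonneg_left hqx (by positivity)).trans hx1.le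
        have e : 8 * l j = cbar / Real.sqrt ε * (M / 2 * q j) := by
          simp only [hl]; field_simp; ring
        rw [e]
        refine (mul_le_mul_of_nonneg_left h1 (by positivity)).trans (le_of_eq ?_)
        field_simp
      have hadd := II_add hc hs (a j) 0 (x / ε)
      have hlen : 2 * (2 ^ (j + 1) / ε) ≤ n j * m := by
        have := Nat.le_ceil ((2 : ℝ) ^ (j + 2) / (ε * m))
        have h3 := mul_le_mul_of_nonneg_right this hm.le
        refine le_trans (le_of_eq ?_) h3
        rw [pow_succ 2 (j + 1)]
        field_simp
      have hpos : 0 < (2 : ℝ) ^ (j + 1) / ε := by positivity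
      have hxle : |x / ε| ≤ 2 ^ (j + 1) / ε := by
        rw [abs_div, abs_of_pos hε0]
        gcongr
        linarith
      have hxx := abs_le.1 hxle
      have haj : a j = -(2 ^ (j + 1) / ε) := rfl
      refine Set.mem_iUnion.2 ⟨j, ?_⟩
      by_cases hcase : 4 * l j ≤ |II c (a j) (x / ε) s|
      · exact ⟨x / ε, ⟨by linarith, by linarith⟩, hcase⟩
      · refine ⟨0, ⟨by linarith, by linarith⟩, ?_⟩
        have e : II c 0 (x / ε) s = II c (a j) (x / ε) s - II c (a j) 0 s := by
          rw [hadd]; ring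
        rw [e] at h8
        have := abs_sub (II c (a j) (x / ε) s) (II c (a j) 0 s)
        linarith
    refine hsub.trans ((measure_iUnion_le _).trans ?_)
    have hterm : ∀ j, P {s | ∃ x ∈ Set.Icc (a j) (a j + n j * m), 4 * l j ≤ |II c (a j) x s|} ≤
        ENNReal.ofReal (C0 / M ^ 2 * r ^ j) := fun j =>
      (hmax (a j) (n j) (l j) (hnp j) (hlp j)).trans (ENNReal.ofReal_le_ofReal (hbound j))
    refine (ENNReal.tsum_le_tsum hterm).trans ?_
    rw [← ENNReal.ofReal_tsum_of_nonneg (fun j => by positivity)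
      ((summable_geometric_of_lt_one hr0.le hr1).mul_left _), tsum_mul_left,
      tsum_geometric_of_lt_one hr0.le hr1]
    refine ENNReal.ofReal_le_ofReal (le_of_eq ?_)
    ring
  refine ⟨fun δ hδ => ?_, hmain⟩
  obtain ⟨C', hC'⟩ := hmain
  refine ⟨|C'| / δ + 1, by positivity, fun ε hε => ?_⟩
  refine (hC' _ (by positivity) ε hε).trans (ENNReal.ofReal_le_ofReal ?_)
  have h0 : 0 ≤ |C'| / δ := by positivity
  rw [div_le_iff₀ (by positivity)]
  have h1 : |C'| / δ ≤ (|C'| / δ + 1) ^ 2 := by nlinarith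
  have h2 := mul_le_mul_of_nonneg_left h1 hδ.le
  rw [mul_div_cancel₀ _ hδ.ne'] at h2
  exact (le_abs_self _).trans h2
end
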